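/- The expected number of (App)-redexes in a uniformly random λυ-term of size n satisfies E(X_n)/n → 1/32, where an (App)-redex is a subterm of the form (a b)[s]. -/

import Mathlib

open Finset Filter

mutual
inductive Tm : Type
  | idx : Nat → Tm
  | lam : Tm → Tm
  | app : Tm → Tm → Tm
  | clos : Tm → Subst → Tm
inductive Subst : Type
  | slash : Tm → Subst
  | lift : Subst → Subst
  | shift : Subst
end

mutual
/-- Natural size of a λυ-term: every constructor weighs 1; index n has size n+1. -/
def Tm.size : Tm → Nat
  | .idx n => n + 1
  | .lam a => Tm.size a + 1
  | .app a b => Tm.size a + Tm.size b + 1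
  | .clos a s => Tm.size a + Subst.size s + 1
/-- Natural size of an explicit substitution. -/
def Subst.size : Subst → Nat
  | .slash a => Tm.size a + 1
  | .lift s => Subst.size s + 1
  | .shift => 1
end

/-- Number of λυ-terms of size `n`. -/
noncomputable def tcount (n : ℕ) : ℕ := Nat.card {a : Tm // Tm.size a = n}

/-- Number of explicit substitutions of size `n`. -/
noncomputable def scount (n : ℕ) : ℕ := Nat.card {s : Subst // Subst.size s = n}

/-- Expected value of the statistic `f` on a uniformly random λυ-term of size `n`
(the statistic is assumed to be bounded by the size, so summing `k` up to `n` suffices). -/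
noncomputable def expectTm (f : Tm → ℕ) (n : ℕ) : ℝ :=
  (∑ k ∈ Finset.range (n + 1),
      (k : ℝ) * (Nat.card {a : Tm // Tm.size a = n ∧ f a = k} : ℝ)) / (tcount n : ℝ)

mutual
/-- Number of (app)-redexes occurring in a λυ-term. -/
def Tm.appCount : Tm → ℕ
  | .idx _ => 0
  | .lam a => Tm.appCount a
  | .app a b => Tm.appCount a + Tm.appCount b
  | .clos (.app a b) s => Tm.appCount a + Tm.appCount b + Subst.appCount s + 1
  | .clos a s => Tm.appCount a + Subst.appCount s
/-- Number of (app)-redexes occurring in a substitution. -/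
def Subst.appCount : Subst → ℕ
  | .slash a => Tm.appCount a
  | .lift s => Subst.appCount s
  | .shift => 0
end

/-!
Let `T`, `S` be the generating series of terms and substitutions by size, and `C` the Catalan
series, i.e. the solution of `C = 1 + X C²`. Eliminating `S` from the functional equations read off
the grammar gives `T = X (1 + T)²`, so `1 + T = C`. The series `A` of the total number of redexes
satisfies a linear equation over `T` and `S`, which becomes `A (1 - 2 X C) = X⁵ C⁵`. Since
`∑ (2n + k choose n) Xⁿ = C ^ k / (1 - 2 X C)`, the terms of size `n + 5` contain
`(2n + 5 choose n)` redexes in total, and the ratio to `catalan (n + 5)` is an explicit rational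
function of `n`.
-/

open PowerSeries
open scoped Nat

section CatalanSeries

variable (R : Type*)

/-- The generating series `∑ catalan n * X ^ n` of the Catalan numbers with coefficients in an
arbitrary semiring. -/
noncomputable def catalanGF [Semiring R] : R⟦X⟧ :=
  PowerSeries.map (Nat.castRingHom R) catalanSeries

/-- The generating series `∑ (2 n + k).choose n * X ^ n` of the binomial coefficients
`(n + (n + k))! / (n! (n + k)!)`; the case `k = 0` is that of the central ones. -/
noncomputable def shiftedCentralBinomGF [Semiring R] (k : ℕ) : R⟦X⟧ :=
  PowerSeries.mk fun n => ((2 * n + k).choose n : R)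

@[simp]
theorem coeff_catalanGF [Semiring R] (n : ℕ) : coeff n (catalanGF R) = catalan n := by
  simp [catalanGF]

@[simp]
theorem coeff_shiftedCentralBinomGF [Semiring R] (k n : ℕ) :
    coeff n (shiftedCentralBinomGF R k) = (2 * n + k).choose n := by
  simp [shiftedCentralBinomGF]

theorem catalanGF_eq_one_add_X_mul_sq [Semiring R] : catalanGF R = 1 + X * catalanGF R ^ 2 := by
  have h := congrArg (PowerSeries.map (Nat.castRingHom R)) catalanSeries_sq_mul_X_add_one
  rw [map_add, map_mul, map_pow, map_one, map_X] at h
  rw [catalanGF, X_mul, add_comm, h]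

theorem shiftedCentralBinomGF_succ [Semiring R] (k : ℕ) :
    shiftedCentralBinomGF R (k + 1) =
      shiftedCentralBinomGF R k + X * shiftedCentralBinomGF R (k + 2) := by
  ext n
  cases n with
  | zero => simp [shiftedCentralBinomGF]
  | succ n =>
    have pascal : (2 * (n + 1) + (k + 1)).choose (n + 1) =
        (2 * (n + 1) + k).choose (n + 1) + (2 * n + (k + 2)).choose n := by
      rw [← add_assoc, Nat.choose_succ_succ', add_comm,
        show 2 * (n + 1) + k = 2 * n + (k + 2) by lia]
    simp only [map_add, coeff_succ_X_mul, coeff_shiftedCentralBinomGF]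
    exact_mod_cast congrArg (Nat.cast : ℕ → R) pascal

theorem shiftedCentralBinomGF_zero [Semiring R] :
    shiftedCentralBinomGF R 0 =
      1 + X * (shiftedCentralBinomGF R 1 + shiftedCentralBinomGF R 1) := by
  ext n
  cases n with
  | zero => simp [shiftedCentralBinomGF]
  | succ n =>
    have pascal : (2 * (n + 1) + 0).choose (n + 1) =
        (2 * n + 1).choose n + (2 * n + 1).choose n := by
      rw [show 2 * (n + 1) + 0 = 2 * n + 1 + 1 by lia, Nat.choose_succ_succ', Nat.choose_symm_half]
    simp only [map_add, coeff_succ_X_mul, coeff_shiftedCentralBinomGF, coeff_one, pascal]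
    simp

variable [CommRing R]

variable {R} in
theorem eq_catalanGF_of_eq_one_add_X_mul_sq {F : R⟦X⟧} (hF : F = 1 + X * F ^ 2) :
    F = catalanGF R := by
  have hunit : IsUnit (1 - X * (F + catalanGF R)) := isUnit_iff_constantCoeff.mpr (by simp)
  refine sub_eq_zero.mp (hunit.mul_right_eq_zero.mp ?_)
  linear_combination hF - catalanGF_eq_one_add_X_mul_sq R

theorem shiftedCentralBinomGF_succ_eq_catalanGF_mul (k : ℕ) :
    shiftedCentralBinomGF R (k + 1) = catalanGF R * shiftedCentralBinomGF R k := by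
  let D (k : ℕ) : R⟦X⟧ :=
    shiftedCentralBinomGF R (k + 1) - catalanGF R * shiftedCentralBinomGF R k
  have hD (k : ℕ) : D k = X * (catalanGF R * D (k + 1)) := by
    linear_combination catalanGF R * shiftedCentralBinomGF_succ R k
      - shiftedCentralBinomGF R (k + 1) * catalanGF_eq_one_add_X_mul_sq R
  -- Each use of `hD` extracts one more factor `X`, so no coefficient of `D k` can be nonzero.
  have hdvd (m : ℕ) : ∀ k, X ^ m ∣ D k := by
    induction m with
    | zero => simp
    | succ m ih =>
      intro k
      rw [hD, pow_succ']
      exact mul_dvd_mul_left X ((ih (k + 1)).mul_left _)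
  refine sub_eq_zero.mp (PowerSeries.ext fun n => ?_)
  exact X_pow_dvd_iff.mp (hdvd (n + 1) k) n n.lt_succ_self

theorem shiftedCentralBinomGF_eq_catalanGF_pow_mul (k : ℕ) :
    shiftedCentralBinomGF R k = catalanGF R ^ k * shiftedCentralBinomGF R 0 := by
  induction k with
  | zero => simp
  | succ k ih => rw [shiftedCentralBinomGF_succ_eq_catalanGF_mul, ih, pow_succ', mul_assoc]

theorem shiftedCentralBinomGF_zero_mul_one_sub :
    shiftedCentralBinomGF R 0 * (1 - 2 * X * catalanGF R) = 1 := by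
  linear_combination shiftedCentralBinomGF_zero R
    + 2 * X * shiftedCentralBinomGF_succ_eq_catalanGF_mul R 0

end CatalanSeries

/-- A combinatorial class: a type with a size function that takes each value finitely often. -/
class CombinatorialClass (α : Type*) where
  size : α → ℕ
  finite_setOf_size_eq (n : ℕ) : {a | size a = n}.Finite

namespace CombinatorialClass

/-- The finite set of objects of size `n` in a combinatorial class. -/
noncomputable def ofSize (α : Type*) [CombinatorialClass α] (n : ℕ) : Finset α :=
  (finite_setOf_size_eq n).toFinset

@[simp]
theorem mem_ofSize {α : Type*} [CombinatorialClass α] {n : ℕ} {a : α} :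
    a ∈ ofSize α n ↔ size a = n := by
  simp [ofSize]

instance : CombinatorialClass Unit where
  size _ := 0
  finite_setOf_size_eq _ := Set.toFinite _

instance : CombinatorialClass ℕ where
  size := id
  finite_setOf_size_eq := Set.finite_singleton

instance {α β : Type*} [CombinatorialClass α] [CombinatorialClass β] :
    CombinatorialClass (α ⊕ β) where
  size := Sum.elim size size
  finite_setOf_size_eq n := by
    refine ((ofSize α n).disjSum (ofSize β n)).finite_toSet.subset ?_
    rintro (a | b) h <;> simpa using h

instance {α β : Type*} [CombinatorialClass α] [CombinatorialClass β] :
    CombinatorialClass (α × β) where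
  size p := size p.1 + size p.2
  finite_setOf_size_eq n := by
    refine ((antidiagonal n).finite_toSet.biUnion fun p _ =>
      (ofSize α p.1 ×ˢ ofSize β p.2).finite_toSet).subset ?_
    rintro ⟨a, b⟩ h
    simpa using h

variable {α β R : Type*} [CombinatorialClass α] [CombinatorialClass β] [Semiring R]

/-- The generating series `∑ f a * X ^ size a` of a weight `f` on a combinatorial class. -/
noncomputable def weightSeries (f : α → R) : R⟦X⟧ :=
  PowerSeries.mk fun n => ∑ a ∈ ofSize α n, f a

variable (α R) in
/-- The generating series counting the objects of a combinatorial class by size. -/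
noncomputable def countSeries : R⟦X⟧ :=
  weightSeries fun _ : α => 1

@[simp]
theorem coeff_weightSeries (f : α → R) (n : ℕ) :
    coeff n (weightSeries f) = ∑ a ∈ ofSize α n, f a :=
  coeff_mk _ _

theorem coeff_countSeries (n : ℕ) : coeff n (countSeries α R) = #(ofSize α n) := by
  simp [countSeries]

theorem weightSeries_add (f g : α → R) :
    weightSeries (fun a => f a + g a) = weightSeries f + weightSeries g := by
  ext n
  simp [sum_add_distrib]

@[simp]
theorem weightSeries_zero : weightSeries (fun _ : α => (0 : R)) = 0 := by
  ext n
  simp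

theorem weightSeries_unit (f : Unit → R) : weightSeries f = PowerSeries.C (f ()) := by
  ext n
  have hsize : ofSize Unit n = if n = 0 then {()} else ∅ := by
    ext
    split_ifs with h <;> simp [size, h, eq_comm]
  simp only [coeff_weightSeries, coeff_C, hsize]
  split_ifs <;> simp

theorem countSeries_nat : countSeries ℕ R = PowerSeries.mk 1 := by
  ext n
  have hsize : ofSize ℕ n = {n} := by
    ext
    simp [size]
  simp [coeff_countSeries, hsize]

theorem weightSeries_sum (f : α ⊕ β → R) :
    weightSeries f = weightSeries (fun a => f (.inl a)) + weightSeries (fun b => f (.inr b)) := by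
  ext n
  have hsize : ofSize (α ⊕ β) n = (ofSize α n).disjSum (ofSize β n) := by
    ext (a | b) <;> simp [size]
  simp [hsize]

theorem weightSeries_prod_mul (f : α → R) (g : β → R) :
    weightSeries (fun p : α × β => f p.1 * g p.2) = weightSeries f * weightSeries g := by
  classical
  ext n
  have hmaps : ∀ p ∈ ofSize (α × β) n, (size p.1, size p.2) ∈ antidiagonal n := by
    simp [size]
  simp only [coeff_mul, coeff_weightSeries, sum_mul_sum, ← sum_product']
  rw [← sum_fiberwise_of_maps_to hmaps]
  refine sum_congr rfl fun ij hij => sum_congr ?_ fun _ _ => rfl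
  ext p
  have hp : (size p.1, size p.2) = ij → size p = n := by
    rintro rfl
    exact mem_antidiagonal.mp hij
  simpa [Prod.ext_iff] using hp

theorem countSeries_prod : countSeries (α × β) R = countSeries α R * countSeries β R := by
  simpa [countSeries] using weightSeries_prod_mul (fun _ : α => (1 : R)) (fun _ : β => 1)

theorem weightSeries_prod_add (f : α → R) (g : β → R) :
    weightSeries (fun p : α × β => f p.1 + g p.2) =
      weightSeries f * countSeries β R + countSeries α R * weightSeries g := by
  simp only [countSeries, ← weightSeries_prod_mul, ← weightSeries_add, mul_one, one_mul]

theorem weightSeries_eq_X_mul_of_equiv (e : β ≃ α) (he : ∀ b, size (e b) = size b + 1)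
    (f : α → R) : weightSeries f = X * weightSeries fun b => f (e b) := by
  ext n
  cases n with
  | zero =>
    have hempty : ofSize α 0 = ∅ := by
      ext a
      obtain ⟨b, rfl⟩ := e.surjective a
      simp [he]
    simp [hempty]
  | succ n =>
    have hmap : ofSize α (n + 1) = (ofSize β n).map e.toEmbedding := by
      ext a
      obtain ⟨b, rfl⟩ := e.surjective a
      simp [he]
    simp [coeff_succ_X_mul, hmap]

end CombinatorialClass

open CombinatorialClass

/-- The grammar of terms, as a bijection: a term is an index, an abstraction, an application or a
closure, and has size one more than the preimage. -/
def Tm.grammarEquiv : ℕ ⊕ Tm ⊕ Tm × Tm ⊕ Tm × Subst ≃ Tm where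
  toFun
    | .inl n => .idx n
    | .inr (.inl a) => .lam a
    | .inr (.inr (.inl (a, b))) => .app a b
    | .inr (.inr (.inr (a, s))) => .clos a s
  invFun
    | .idx n => .inl n
    | .lam a => .inr (.inl a)
    | .app a b => .inr (.inr (.inl (a, b)))
    | .clos a s => .inr (.inr (.inr (a, s)))
  left_inv := by rintro (_ | _ | _ | _) <;> rfl
  right_inv := by rintro (_ | _ | _ | _) <;> rfl

/-- The grammar of substitutions, as a bijection: a substitution is a slash, a lift or the shift,
and has size one more than the preimage. -/
def Subst.grammarEquiv : Tm ⊕ Subst ⊕ Unit ≃ Subst where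
  toFun
    | .inl a => .slash a
    | .inr (.inl s) => .lift s
    | .inr (.inr ()) => .shift
  invFun
    | .slash a => .inl a
    | .lift s => .inr (.inl s)
    | .shift => .inr (.inr ())
  left_inv := by rintro (_ | _ | _) <;> rfl
  right_inv := by rintro (_ | _ | _) <;> rfl

theorem finite_tm_subst_size_le (n : ℕ) :
    {a : Tm | a.size ≤ n}.Finite ∧ {s : Subst | s.size ≤ n}.Finite := by
  induction n with
  | zero =>
    refine ⟨Set.finite_empty.subset ?_, Set.finite_empty.subset ?_⟩
    · rintro (_ | _ | _ | _) h <;> simp [Tm.size] at h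
    · rintro (_ | _ | _) h <;> simp [Subst.size] at h
  | succ n ih =>
    obtain ⟨hTm, hSubst⟩ := ih
    constructor
    · refine (((Set.finite_Iic n).image Tm.idx).union <| (hTm.image Tm.lam).union <|
        (hTm.image2 Tm.app hTm).union <| hTm.image2 Tm.clos hSubst).subset ?_
      rintro (_ | _ | _ | _) h <;> grind [Tm.size]
    · refine ((hTm.image Subst.slash).union <| (hSubst.image Subst.lift).union <|
        Set.finite_singleton Subst.shift).subset ?_
      rintro (_ | _ | _) h <;> simp_all [Subst.size]

instance : CombinatorialClass Tm where
  size := Tm.size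
  finite_setOf_size_eq n := (finite_tm_subst_size_le n).1.subset fun _ h => h.le

instance : CombinatorialClass Subst where
  size := Subst.size
  finite_setOf_size_eq n := (finite_tm_subst_size_le n).2.subset fun _ h => h.le

section GrammarSeries

theorem Tm.weightSeries_eq {R : Type*} [Semiring R] (f : Tm → R) :
    weightSeries f = X * (weightSeries (fun n => f (.idx n)) + (weightSeries (fun a => f (.lam a)) +
      (weightSeries (fun p : Tm × Tm => f (.app p.1 p.2)) +
        weightSeries (fun p : Tm × Subst => f (.clos p.1 p.2))))) := by
  have hsize (x) : size (Tm.grammarEquiv x) = CombinatorialClass.size x + 1 := by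
    obtain _ | _ | _ | _ := x <;> rfl
  rw [weightSeries_eq_X_mul_of_equiv Tm.grammarEquiv hsize]
  simp only [weightSeries_sum]
  rfl

theorem Subst.weightSeries_eq {R : Type*} [Semiring R] (f : Subst → R) :
    weightSeries f = X * (weightSeries (fun a => f (.slash a)) +
      (weightSeries (fun s => f (.lift s)) + PowerSeries.C (f .shift))) := by
  have hsize (x) : size (Subst.grammarEquiv x) = CombinatorialClass.size x + 1 := by
    obtain _ | _ | _ := x <;> rfl
  rw [weightSeries_eq_X_mul_of_equiv Subst.grammarEquiv hsize]
  simp only [weightSeries_sum, weightSeries_unit]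
  rfl

theorem Tm.countSeries_eq (R : Type*) [Semiring R] :
    countSeries Tm R = X * (countSeries ℕ R + (countSeries Tm R +
      (countSeries Tm R * countSeries Tm R + countSeries Tm R * countSeries Subst R))) := by
  simp only [← countSeries_prod]
  exact Tm.weightSeries_eq fun _ => 1

variable (R : Type*) [CommRing R]

theorem Subst.one_sub_X_mul_countSeries :
    (1 - X) * countSeries Subst R = X * (1 + countSeries Tm R) := by
  have h : countSeries Subst R = X * (countSeries Tm R + (countSeries Subst R + 1)) := by
    simpa [countSeries] using Subst.weightSeries_eq fun _ => (1 : R)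
  linear_combination h

theorem Tm.one_add_countSeries : 1 + countSeries Tm R = catalanGF R := by
  have hnat : (1 - X) * countSeries ℕ R = 1 := by
    rw [countSeries_nat, mul_comm, PowerSeries.mk_one_mul_one_sub_eq_one]
  apply eq_catalanGF_of_eq_one_add_X_mul_sq
  linear_combination (1 - X) * Tm.countSeries_eq R + X * hnat
    + X * countSeries Tm R * Subst.one_sub_X_mul_countSeries R

end GrammarSeries

section RedexSeries

namespace Tm

/-- The indicator of being an application, i.e. of forming a redex when placed under a closure. -/
def appIndicator : Tm → ℕ
  | app _ _ => 1
  | _ => 0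

theorem appCount_clos (a : Tm) (s : Subst) :
    (clos a s).appCount = a.appCount + s.appCount + a.appIndicator := by
  cases a <;> simp [appCount, appIndicator]

theorem appIndicator_le_one (a : Tm) : a.appIndicator ≤ 1 := by
  cases a <;> simp [appIndicator]

/-- The generating series of the total number of redexes in the terms of each size. -/
noncomputable def redexSeries (R : Type*) [Semiring R] : R⟦X⟧ :=
  weightSeries fun a : Tm => (a.appCount : R)

/-- The generating series counting applications by size. -/
noncomputable def appSeries (R : Type*) [Semiring R] : R⟦X⟧ :=
  weightSeries fun a : Tm => (a.appIndicator : R)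

end Tm

/-- The generating series of the total number of redexes in the substitutions of each size. -/
noncomputable def Subst.redexSeries (R : Type*) [Semiring R] : R⟦X⟧ :=
  weightSeries fun s : Subst => (s.appCount : R)

theorem Tm.redexSeries_eq (R : Type*) [Semiring R] :
    redexSeries R = X * (redexSeries R +
      (redexSeries R * countSeries Tm R + countSeries Tm R * redexSeries R +
        (redexSeries R * countSeries Subst R + countSeries Tm R * Subst.redexSeries R +
          appSeries R * countSeries Subst R))) := by
  have hclos : weightSeries (fun p : Tm × Subst => (p.1.appIndicator : R)) =
      appSeries R * countSeries Subst R := by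
    simpa [appSeries, countSeries] using
      weightSeries_prod_mul (fun a : Tm => (a.appIndicator : R)) fun _ : Subst => 1
  conv_lhs => rw [redexSeries, Tm.weightSeries_eq]
  simp only [appCount_clos, appCount, Nat.cast_add, Nat.cast_zero, weightSeries_zero, zero_add,
    weightSeries_add _ fun p : Tm × Subst => (p.1.appIndicator : R), hclos]
  rw [weightSeries_prod_add (fun a : Tm => (a.appCount : R)) fun b : Tm => (b.appCount : R),
    weightSeries_prod_add (fun a : Tm => (a.appCount : R)) fun s : Subst => (s.appCount : R)]
  rfl

variable (R : Type*) [CommRing R]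

theorem Tm.countSeries_eq_X_mul_catalanGF_sq : countSeries Tm R = X * catalanGF R ^ 2 := by
  linear_combination Tm.one_add_countSeries R + catalanGF_eq_one_add_X_mul_sq R

theorem Tm.appSeries_eq : appSeries R = X ^ 3 * catalanGF R ^ 4 := by
  have h : appSeries R = X * (countSeries Tm R * countSeries Tm R) := by
    rw [appSeries, Tm.weightSeries_eq, ← countSeries_prod]
    simp [appIndicator, countSeries]
  rw [h, countSeries_eq_X_mul_catalanGF_sq]
  ring

theorem Subst.one_sub_X_mul_redexSeries :
    (1 - X) * redexSeries R = X * Tm.redexSeries R := by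
  have h : redexSeries R = X * (Tm.redexSeries R + redexSeries R) := by
    simpa [redexSeries, Tm.redexSeries, appCount] using
      Subst.weightSeries_eq fun s => (s.appCount : R)
  linear_combination h

theorem Tm.redexSeries_mul_one_sub :
    redexSeries R * (1 - 2 * X * catalanGF R) = X ^ 5 * catalanGF R ^ 5 := by
  have hT : countSeries Tm R = catalanGF R - 1 := eq_sub_of_add_eq' (one_add_countSeries R)
  have hS : (1 - X) * countSeries Subst R = X * catalanGF R := by
    rw [Subst.one_sub_X_mul_countSeries, one_add_countSeries]
  have hA := redexSeries_eq R
  rw [hT, appSeries_eq] at hA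
  linear_combination (1 - X) * hA + X * (redexSeries R + X ^ 3 * catalanGF R ^ 4) * hS
    + X * (catalanGF R - 1) * Subst.one_sub_X_mul_redexSeries R

theorem Tm.redexSeries_eq_X_pow_mul : redexSeries R = X ^ 5 * shiftedCentralBinomGF R 5 := by
  rw [shiftedCentralBinomGF_eq_catalanGF_pow_mul]
  linear_combination shiftedCentralBinomGF R 0 * redexSeries_mul_one_sub R
    - redexSeries R * shiftedCentralBinomGF_zero_mul_one_sub R

end RedexSeries

namespace Tm

theorem sum_appCount_ofSize (n : ℕ) :
    ∑ a ∈ ofSize Tm (n + 5), a.appCount = (2 * n + 5).choose n := by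
  have h := congrArg (coeff (n + 5)) (redexSeries_eq_X_pow_mul ℤ)
  rw [coeff_X_pow_mul, coeff_shiftedCentralBinomGF, redexSeries, coeff_weightSeries] at h
  exact_mod_cast h

theorem card_ofSize (n : ℕ) : #(ofSize Tm n) = tcount n :=
  (Nat.subtype_card _ fun _ => mem_ofSize).symm

theorem tcount_succ (n : ℕ) : tcount (n + 1) = catalan (n + 1) := by
  have h := congrArg (coeff (n + 1)) (one_add_countSeries ℤ)
  rw [map_add, coeff_one, if_neg n.succ_ne_zero, zero_add, coeff_countSeries, coeff_catalanGF,
    card_ofSize] at h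
  exact_mod_cast h

theorem expectTm_eq_sum_div (f : Tm → ℕ) (n : ℕ) (hf : ∀ a : Tm, a.size = n → f a ≤ n) :
    expectTm f n = (∑ a ∈ ofSize Tm n, f a : ℕ) / tcount n := by
  have hmaps : ∀ a ∈ ofSize Tm n, f a ∈ range (n + 1) := fun a ha =>
    mem_range_succ_iff.mpr (hf a (mem_ofSize.mp ha))
  have hcard (k : ℕ) : Nat.card {a : Tm // a.size = n ∧ f a = k} =
      #{a ∈ ofSize Tm n | f a = k} :=
    Nat.subtype_card _ fun a => by rw [mem_filter, mem_ofSize]; rfl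
  rw [expectTm, ← sum_fiberwise_of_maps_to hmaps]
  push_cast
  congr 1
  refine sum_congr rfl fun k _ => ?_
  rw [sum_congr rfl fun a ha => congrArg Nat.cast (mem_filter.mp ha).2, sum_const, nsmul_eq_mul,
    hcard, mul_comm]

end Tm

mutual

theorem Tm.appCount_le_size : (a : Tm) → a.appCount ≤ a.size
  | .idx _ => Nat.zero_le _
  | .lam a => a.appCount_le_size.trans (Nat.le_succ _)
  | .app a b => (Nat.add_le_add a.appCount_le_size b.appCount_le_size).trans (Nat.le_succ _)
  | .clos a s => by
    rw [Tm.appCount_clos]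
    exact Nat.add_le_add (Nat.add_le_add a.appCount_le_size s.appCount_le_size)
      a.appIndicator_le_one

theorem Subst.appCount_le_size : (s : Subst) → s.appCount ≤ s.size
  | .slash a => a.appCount_le_size.trans (Nat.le_succ _)
  | .lift s => s.appCount_le_size.trans (Nat.le_succ _)
  | .shift => Nat.zero_le _

end

theorem catalan_mul_factorial_mul_factorial (n : ℕ) :
    catalan n * ((n + 1)! * n !) = (2 * n)! := by
  have h := Nat.choose_mul_factorial_mul_factorial (show n ≤ 2 * n by lia)
  rw [← Nat.centralBinom_eq_two_mul_choose, ← succ_mul_catalan_eq_centralBinom,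
    show 2 * n - n = n by lia] at h
  rw [← h, Nat.factorial_succ]
  ring

theorem catalan_pos (n : ℕ) : 0 < catalan n :=
  Nat.pos_of_mul_pos_right ((2 * n).factorial_pos.trans_eq
    (catalan_mul_factorial_mul_factorial n).symm)

theorem choose_two_mul_add_five_mul_eq_catalan_mul (n : ℕ) :
    (2 * n + 5).choose n * (8 * (2 * n + 7) * (2 * n + 9)) =
      catalan (n + 5) * ((n + 1) * (n + 2) * (n + 6)) := by
  have hchoose : (2 * n + 5).choose n * (n ! * (n + 5)!) = (2 * n + 5)! := by
    have h := Nat.choose_mul_factorial_mul_factorial (show n ≤ 2 * n + 5 by lia)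
    rwa [show 2 * n + 5 - n = n + 5 by lia, mul_assoc] at h
  have hcatalan := catalan_mul_factorial_mul_factorial (n + 5)
  have hshift : (n + 5)! = (n + 5) * (n + 4) * (n + 3) * (n + 2) * (n + 1) * n ! := by
    simp only [Nat.factorial_succ]
    ring
  have hdouble : (2 * (n + 5))! =
      (n + 3) * (n + 4) * (n + 5) * (8 * (2 * n + 7) * (2 * n + 9)) * (2 * n + 5)! := by
    rw [show 2 * (n + 5) = 2 * n + 5 + 5 by ring]
    simp only [Nat.factorial_succ (2 * n + 5), Nat.factorial_succ (2 * n + 5 + 1),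
      Nat.factorial_succ (2 * n + 5 + 2), Nat.factorial_succ (2 * n + 5 + 3),
      Nat.factorial_succ (2 * n + 5 + 4)]
    ring
  have hpos : 0 < (n + 3) * (n + 4) * (n + 5) * (n ! * (n + 5)!) := by positivity
  refine Nat.eq_of_mul_eq_mul_right hpos ?_
  calc (2 * n + 5).choose n * (8 * (2 * n + 7) * (2 * n + 9)) *
        ((n + 3) * (n + 4) * (n + 5) * (n ! * (n + 5)!))
    _ = (2 * (n + 5))! := by rw [hdouble, ← hchoose]; ring
    _ = catalan (n + 5) * ((n + 6) * (n + 5)! * (n + 5)!) := by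
      rw [← hcatalan, Nat.factorial_succ (n + 5)]
    _ = catalan (n + 5) * ((n + 1) * (n + 2) * (n + 6)) *
        ((n + 3) * (n + 4) * (n + 5) * (n ! * (n + 5)!)) := by
      nth_rw 1 [hshift]; ring

theorem expectTm_appCount_div_size (n : ℕ) :
    expectTm Tm.appCount (n + 5) / ((n + 5 : ℕ) : ℝ) =
      (n + 1) * (n + 2) * (n + 6) / (8 * (n + 5) * (2 * n + 7) * (2 * n + 9)) := by
  have hcatalan : (catalan (n + 5) : ℝ) ≠ 0 := mod_cast (catalan_pos _).ne'
  have hratio : ((2 * n + 5).choose n * (8 * (2 * n + 7) * (2 * n + 9)) : ℝ) =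
      catalan (n + 5) * ((n + 1) * (n + 2) * (n + 6)) :=
    mod_cast choose_two_mul_add_five_mul_eq_catalan_mul n
  rw [Tm.expectTm_eq_sum_div _ _ fun a ha => (Tm.appCount_le_size a).trans_eq ha,
    Tm.sum_appCount_ofSize, Tm.tcount_succ (n + 4)]
  push_cast
  field_simp
  linear_combination hratio

/-- the expected number of (App)-redexes (subterms (a b)[s]) per size n
tends to 1/32. -/
theorem stmt15 :
    Tendsto (fun n : ℕ => expectTm Tm.appCount n / (n : ℝ)) atTop (nhds (1 / 32)) := by
  rw [← tendsto_add_atTop_iff_nat 5]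
  have h₁ := tendsto_add_mul_div_add_mul_atTop_nhds (1 : ℝ) 5 1 one_ne_zero
  have h₂ := tendsto_add_mul_div_add_mul_atTop_nhds (2 : ℝ) 7 1 two_ne_zero
  have h₃ := tendsto_add_mul_div_add_mul_atTop_nhds (6 : ℝ) 9 1 two_ne_zero
  convert ((h₁.mul h₂).mul h₃).div_const 8 using 2 with n
  · rw [expectTm_appCount_div_size]
    field_simp
    ring
  · norm_num
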